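/- Let T be a rooted tree on a vertex set X. Then every subgroup of the semigroup of path-bijections 𝒮(T) is trivial; that is, every subsemigroup of 𝒮(T) which forms a group under the induced composition consists of exactly one element (an idempotent of 𝒮(T)). -/

import Mathlib

open Set Cardinal

universe u

/-- A chart on `X` (an element of the symmetric inverse monoid `I_X`): a partial
bijection between subsets of `X`, encoded as a functional, injective relation,
i.e. a set of pairs. -/
structure Chart (X : Type u) : Type u where
  rel : Set (X × X)
  functional : ∀ ⦃x y y'⦄, (x, y) ∈ rel → (x, y') ∈ rel → y = y'
  injective : ∀ ⦃x x' y⦄, (x, y) ∈ rel → (x', y) ∈ rel → x = x'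

namespace Chart

variable {X : Type u}

/-- Composition of charts: compose wherever possible. -/
instance : Mul (Chart X) :=
  ⟨fun f g =>
    { rel := {p | ∃ y, (p.1, y) ∈ f.rel ∧ (y, p.2) ∈ g.rel}
      functional := by
        rintro x y y' ⟨z, hz1, hz2⟩ ⟨w, hw1, hw2⟩
        obtain rfl : z = w := f.functional hz1 hw1
        exact g.functional hz2 hw2
      injective := by
        rintro x x' y ⟨z, hz1, hz2⟩ ⟨w, hw1, hw2⟩
        obtain rfl : z = w := g.injective hz2 hw2
        exact f.injective hz1 hw1 }⟩

/-- The inverse chart. -/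
instance : Inv (Chart X) :=
  ⟨fun f =>
    { rel := {p | (p.2, p.1) ∈ f.rel}
      functional := fun _ _ _ h h' => f.injective h h'
      injective := fun _ _ _ h h' => f.functional h h' }⟩

/-- The domain of a chart. -/
def dom (f : Chart X) : Set X := {x | ∃ y, (x, y) ∈ f.rel}

/-- The range (image) of a chart. -/
def ran (f : Chart X) : Set X := {y | ∃ x, (x, y) ∈ f.rel}

end Chart

/-- Membership in the subsemigroup of `I_X` generated by a set of charts. -/
inductive InGen {X : Type u} (S : Set (Chart X)) : Chart X → Prop
  | base {f : Chart X} : f ∈ S → InGen S f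
  | mul {f g : Chart X} : InGen S f → InGen S g → InGen S (f * g)

/-- The subsemigroup of `I_X` generated by a set of charts. -/
def Sgen {X : Type u} (S : Set (Chart X)) : Set (Chart X) := {f | InGen S f}

/-- The Bergman–Shelah preorder `S ≼ T` on subsets of `I_X`: there is a countable
subset `U ⊆ I_X` with `S` contained in the subsemigroup generated by `T ∪ U`. -/
def BSleq {X : Type u} (S T : Set (Chart X)) : Prop :=
  ∃ U : Set (Chart X), U.Countable ∧ S ⊆ Sgen (T ∪ U)

/-- Bergman–Shelah equivalence `S ≈ T`. -/
def BSequiv {X : Type u} (S T : Set (Chart X)) : Prop := BSleq S T ∧ BSleq T S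

/-- The Bergman–Shelah preorder relative to a cardinal `κ`: `S ≼_κ T` iff there is
`U ⊆ I_X` with `|U| < κ` and `S` contained in the subsemigroup generated by `T ∪ U`. -/
def BSleqC {X : Type u} (κ : Cardinal.{u}) (S T : Set (Chart X)) : Prop :=
  ∃ U : Set (Chart X), #↥U < κ ∧ S ⊆ Sgen (T ∪ U)

/-- Bergman–Shelah equivalence relative to a cardinal `κ`. -/
def BSequivC {X : Type u} (κ : Cardinal.{u}) (S T : Set (Chart X)) : Prop :=
  BSleqC κ S T ∧ BSleqC κ T S

/-- A chart is a permutation of `X` if it is everywhere defined and surjective. -/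
def IsPermChart {X : Type u} (f : Chart X) : Prop :=
  (∀ x : X, ∃ y, (x, y) ∈ f.rel) ∧ ∀ y : X, ∃ x, (x, y) ∈ f.rel

/-- The partwise stabiliser of a family of subsets of `X`: all permutations of `X`
mapping each member of the family onto itself. -/
def PStab {X : Type u} (P : Set (Set X)) : Set (Chart X) :=
  {f | IsPermChart f ∧ ∀ B ∈ P, {y | ∃ x ∈ B, (x, y) ∈ f.rel} = B}

/-- A subset of `I_X` closed under composition. -/
def IsSubsemigroup {X : Type u} (S : Set (Chart X)) : Prop :=
  ∀ f ∈ S, ∀ g ∈ S, f * g ∈ S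

/-- A subsemigroup of `I_X` closed under inversion. -/
def IsInverseSubsemigroup {X : Type u} (S : Set (Chart X)) : Prop :=
  IsSubsemigroup S ∧ ∀ f ∈ S, f⁻¹ ∈ S

/-- The orbit of a point under a set of charts: `{x} ∪ {xf : f ∈ M, x ∈ dom f}`. -/
def ChartOrbit {X : Type u} (M : Set (Chart X)) (x : X) : Set X :=
  insert x {y | ∃ f ∈ M, (x, y) ∈ f.rel}

/-- The cone of a point under a set of charts: `{xs : s ∈ S, x ∈ dom s}`. -/
def ChartCone {X : Type u} (S : Set (Chart X)) (x : X) : Set X :=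
  {y | ∃ f ∈ S, (x, y) ∈ f.rel}

/-- The semilattice of idempotents of `I_X`: the partial identity charts. -/
def EX (X : Type u) : Set (Chart X) := {f | ∀ x y : X, (x, y) ∈ f.rel → y = x}

/-- A `κ`-uniform partition: every part has cardinality `κ`. -/
def IsUniformPartition {X : Type u} (κ : Cardinal.{u}) (P : Set (Set X)) : Prop :=
  Setoid.IsPartition P ∧ ∀ B ∈ P, #↥B = κ

/-- A `κ`-unbounded partition: all parts have cardinality `< κ` but no cardinal
`c < κ` bounds the cardinalities of all parts. -/
def IsUnboundedPartition {X : Type u} (κ : Cardinal.{u}) (P : Set (Set X)) : Prop :=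
  Setoid.IsPartition P ∧ (∀ B ∈ P, #↥B < κ) ∧ ¬∃ c < κ, ∀ B ∈ P, #↥B ≤ c

/-- A `κ`-bounded partition: some cardinal `c < κ` bounds the cardinalities of
all parts. -/
def IsBoundedPartition {X : Type u} (κ : Cardinal.{u}) (P : Set (Set X)) : Prop :=
  Setoid.IsPartition P ∧ ∃ c < κ, ∀ B ∈ P, #↥B ≤ c

/-- A rooted tree on (a subset of) `X`, encoded via its parent function: every
vertex reaches the root by finitely many applications of `par`. -/
structure RTree (X : Type u) : Type u where
  verts : Set X
  root : X
  root_mem : root ∈ verts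
  par : X → X
  par_mem : ∀ x ∈ verts, par x ∈ verts
  par_root : par root = root
  par_reaches : ∀ x ∈ verts, ∃ n : ℕ, par^[n] x = root

namespace RTree

variable {X : Type u}

/-- `T.anc x y` : `x` is an ancestor of `y` (or `x = y`), i.e. `x` lies on the
rooted path to `y`. -/
def anc (T : RTree X) (x y : X) : Prop := ∃ n : ℕ, T.par^[n] y = x

/-- The level of a vertex: its distance to the root. -/
noncomputable def level (T : RTree X) (x : X) : ℕ := sInf {n : ℕ | T.par^[n] x = T.root}

/-- The children of a vertex. -/
def children (T : RTree X) (x : X) : Set X :=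
  {y | y ∈ T.verts ∧ T.par y = x ∧ y ≠ x}

/-- The neighbours of a vertex in the tree (its children together with its
parent, if the vertex is not the root); the degree of the vertex is the size
of this set. -/
def nbhd (T : RTree X) (x : X) : Set X :=
  {y | y ∈ T.verts ∧ ((T.par y = x ∧ y ≠ x) ∨ (T.par x = y ∧ x ≠ y))}

/-- `P` is the vertex set of a (finite or infinite) path of `T` starting at the
root: a nonempty set of vertices closed under taking parents and linearly
ordered by ancestry. -/
def IsRootedPath (T : RTree X) (P : Set X) : Prop :=
  P.Nonempty ∧ P ⊆ T.verts ∧ (∀ x ∈ P, T.par x ∈ P) ∧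
    ∀ x ∈ P, ∀ y ∈ P, T.anc x y ∨ T.anc y x

end RTree

/-- `T'` is a subtree of `T`: a rooted tree on a subset of the vertices of `T`,
with the same root and the same parent relation. -/
def IsSubtree {X : Type u} (T' T : RTree X) : Prop :=
  T'.verts ⊆ T.verts ∧ T'.root = T.root ∧ ∀ x ∈ T'.verts, T'.par x = T.par x

/-- `Q` is a quasi-subtree of `T`: a rooted tree on a subset of the vertices of
`T` preserving the ancestry relation and the levels of `T`. -/
def IsQuasiSubtree {X : Type u} (Q T : RTree X) : Prop :=
  Q.verts ⊆ T.verts ∧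
    (∀ x ∈ Q.verts, ∀ y ∈ Q.verts, (Q.anc x y ↔ T.anc x y)) ∧
    ∀ x ∈ Q.verts, ∀ y ∈ Q.verts, (Q.level x = Q.level y ↔ T.level x = T.level y)

/-- Isomorphism of rooted trees: a bijection of the vertex sets mapping root to
root and commuting with the parent functions. -/
def RTreeIso {X : Type u} {Y : Type u} (T : RTree X) (R : RTree Y) : Prop :=
  ∃ φ : X → Y, Set.BijOn φ T.verts R.verts ∧ φ T.root = R.root ∧
    ∀ x ∈ T.verts, φ (T.par x) = R.par (φ x)

/-- The semigroup `𝒮(T)` of path-bijections of a rooted tree `T`: charts whose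
domain and range are vertex sets of rooted paths and which preserve levels. -/
def pathSg {X : Type u} (T : RTree X) : Set (Chart X) :=
  {f | (∃ P, T.IsRootedPath P ∧ Chart.dom f = P) ∧
    (∃ Q, T.IsRootedPath Q ∧ Chart.ran f = Q) ∧
    ∀ x y : X, (x, y) ∈ f.rel → T.level y = T.level x}

/-! Ancestors on the same level coincide, so the level is injective on a rooted path. If `e` is the
identity of a group of path-bijections, each member `f` maps the rooted path `dom e` into itself and
preserves levels, so it fixes `dom e` pointwise. As `f` is injective with range inside `dom e`, it
is defined nowhere else. -/

namespace RTree

variable {X : Type u} (T : RTree X) {x y : X}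

theorem par_iterate_level (hx : x ∈ T.verts) : T.par^[T.level x] x = T.root :=
  Nat.sInf_mem (T.par_reaches x hx)

theorem par_iterate_eq_root_of_level_le (hx : x ∈ T.verts) {n : ℕ} (hn : T.level x ≤ n) :
    T.par^[n] x = T.root := by
  rw [← Nat.sub_add_cancel hn, Function.iterate_add_apply, T.par_iterate_level hx,
    Function.iterate_fixed T.par_root]

theorem level_par_iterate_le (hx : x ∈ T.verts) (n : ℕ) :
    T.level (T.par^[n] x) ≤ T.level x - n := by
  refine Nat.sInf_le ?_
  rw [Set.mem_ofPred_eq, ← Function.iterate_add_apply]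
  exact T.par_iterate_eq_root_of_level_le hx le_tsub_add

theorem eq_of_anc_of_level_eq (hx : x ∈ T.verts) (hyx : T.anc y x)
    (hlevel : T.level y = T.level x) : y = x := by
  obtain ⟨n, rfl⟩ := hyx
  have hle := T.level_par_iterate_le hx n
  obtain rfl | hroot : n = 0 ∨ T.level x = 0 := by lia
  · rfl
  · have eq_root : x = T.root := T.par_iterate_eq_root_of_level_le (n := 0) hx hroot.le
    rw [eq_root, Function.iterate_fixed T.par_root]

variable {T} in
theorem IsRootedPath.injOn_level {P : Set X} (hP : T.IsRootedPath P) : InjOn T.level P := by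
  obtain ⟨-, hverts, -, hchain⟩ := hP
  intro x hx y hy hlevel
  rcases hchain x hx y hy with hxy | hyx
  · exact T.eq_of_anc_of_level_eq (hverts hy) hxy hlevel
  · exact (T.eq_of_anc_of_level_eq (hverts hx) hyx hlevel.symm).symm

end RTree

namespace Chart

attribute [ext] Chart

variable {X : Type u} {e f g : Chart X} {x y : X}

theorem mem_rel_mul : (x, y) ∈ (f * g).rel ↔ ∃ z, (x, z) ∈ f.rel ∧ (z, y) ∈ g.rel :=
  Iff.rfl

theorem dom_mul_subset (f g : Chart X) : (f * g).dom ⊆ f.dom :=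
  fun _ ⟨_, z, hz, _⟩ => ⟨z, hz⟩

theorem mem_rel_self_of_mul_eq_left (hfe : f * e = f) (hxy : (x, y) ∈ f.rel) :
    (y, y) ∈ e.rel := by
  obtain ⟨z, hxz, hzy⟩ := mem_rel_mul.1 (hfe.symm ▸ hxy)
  rwa [f.functional hxz hxy] at hzy

theorem eq_of_injOn_dom {α : Type*} {ℓ : X → α} (hfe : f * e = f) (hfg : f * g = e)
    (hℓ : ∀ x y, (x, y) ∈ f.rel → ℓ y = ℓ x) (hinj : InjOn ℓ e.dom) : f = e := by
  have ran_subset {x y : X} (hxy : (x, y) ∈ f.rel) : y ∈ e.dom :=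
    ⟨y, mem_rel_self_of_mul_eq_left hfe hxy⟩
  have fixes {x : X} (hx : x ∈ e.dom) : (x, x) ∈ f.rel := by
    obtain ⟨y, hxy⟩ : x ∈ f.dom := dom_mul_subset f g (hfg.symm ▸ hx)
    rwa [hinj (ran_subset hxy) hx (hℓ x y hxy)] at hxy
  ext ⟨x, y⟩
  constructor
  · intro hxy
    obtain rfl : x = y := f.injective hxy (fixes (ran_subset hxy))
    exact mem_rel_self_of_mul_eq_left hfe hxy
  · intro hxy
    have hxx : (x, x) ∈ f.rel := fixes ⟨y, hxy⟩
    obtain rfl : y = x := e.functional hxy (mem_rel_self_of_mul_eq_left hfe hxx)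
    exact hxx

end Chart

theorem stmt10_general {X : Type u} (T : RTree X) (H : Set (Chart X)) (hH : H ⊆ pathSg T)
    (e : Chart X) (he : e ∈ H) (hid : ∀ f ∈ H, f * e = f) (hinv : ∀ f ∈ H, ∃ g, f * g = e) :
    H = {e} ∧ e * e = e := by
  refine ⟨Set.eq_singleton_iff_unique_mem.2 ⟨he, fun f hf => ?_⟩, hid e he⟩
  obtain ⟨⟨_, hpath, rfl⟩, -, -⟩ := hH he
  obtain ⟨-, -, hlevel⟩ := hH hf
  obtain ⟨g, hfg⟩ := hinv f hf
  exact Chart.eq_of_injOn_dom (hid f hf) hfg hlevel hpath.injOn_level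

/-- every subgroup of the path-bijection semigroup `𝒮(T)` of a
rooted tree `T` on a vertex set `X` is trivial: any subset of `𝒮(T)` which is
closed under composition and forms a group (with identity `e`) is the singleton
`{e}`, where `e` is an idempotent. -/
theorem stmt10 {X : Type u} (T : RTree X) (hT : T.verts = Set.univ)
    (H : Set (Chart X)) (hH : H ⊆ pathSg T)
    (hmul : ∀ f ∈ H, ∀ g ∈ H, f * g ∈ H)
    (e : Chart X) (he : e ∈ H)
    (hid : ∀ f ∈ H, e * f = f ∧ f * e = f)
    (hinv : ∀ f ∈ H, ∃ g ∈ H, f * g = e ∧ g * f = e) :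
    H = {e} ∧ e * e = e :=
  stmt10_general T H hH e he (fun f hf => (hid f hf).2)
    fun f hf => (hinv f hf).imp fun _ hg => hg.2.1
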